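/- Let Q be a linear system of quadrics on a finite-dimensional vector space V. Suppose the following condition (*) holds: letting B ⊂ P(V) be the base locus of Q and b := dim B, for every k ≤ b the subset W_k := { v ∈ B : the contraction map i_v: Q → V^* has rank ≤ k } has dimension < k. Then Q contains a smooth quadric. -/

import Mathlib

/-!
STATEMENT 17 (Voisin–Höring, Lemma 3.9):
Let `Q` be a linear system of quadrics on a finite-dimensional complex vector space
`V`.  Suppose the following condition (*) holds: letting `B ⊂ ℙ(V)` be the base locus
of `Q` and `b := dim B`, for every `k ≤ b` the subset
`W_k := { v ∈ B : the contraction map i_v : Q → V^* has rank ≤ k }` has dimension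
`< k`.  Then `Q` contains a smooth quadric (one whose associated symmetric bilinear
form is nondegenerate).

Here the dimension of a subset of `ℙ(V)` is its Zariski dimension: the Krull dimension
of the poset of irreducible Zariski-closed subsets of `ℙ(V)` contained in it, a
Zariski-closed subset of `ℙ(V)` being one whose affine cone is a common zero locus of
polynomial functions on `V`.
-/

open Module

noncomputable section

variable (V : Type) [AddCommGroup V] [Module ℂ V]

/-- The algebra of polynomial functions on `V`: the subalgebra of `V → ℂ` generated by
the linear forms. -/
def PolyFun : Subalgebra ℂ (V → ℂ) :=
  Algebra.adjoin ℂ (Set.range fun φ : Module.Dual ℂ V => (φ : V → ℂ))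

/-- A subset `A` of `ℙ(V)` is Zariski closed if its affine cone is the common zero
locus of a family of polynomial functions on `V`. -/
def IsZariskiClosed (A : Set (Projectivization ℂ V)) : Prop :=
  ∃ S : Set (V → ℂ), (∀ f ∈ S, f ∈ PolyFun V) ∧
    ∀ (v : V) (hv : v ≠ 0), (Projectivization.mk ℂ v hv ∈ A ↔ ∀ f ∈ S, f v = 0)

/-- The (Zariski) dimension of a subset `A ⊆ ℙ(V)`: the Krull dimension of the poset
(ordered by inclusion) of irreducible Zariski-closed subsets of `ℙ(V)` contained
in `A`. -/
def zariskiDim (A : Set (Projectivization ℂ V)) : WithBot ℕ∞ :=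
  Order.krullDim {Z : Set (Projectivization ℂ V) //
    IsZariskiClosed V Z ∧ Z.Nonempty ∧
    (∀ Z₁ Z₂ : Set (Projectivization ℂ V), IsZariskiClosed V Z₁ → IsZariskiClosed V Z₂ →
        Z ⊆ Z₁ ∪ Z₂ → Z ⊆ Z₁ ∨ Z ⊆ Z₂) ∧ Z ⊆ A}

/-- The base locus `B ⊂ ℙ(V)` of a linear system of quadrics `Q` on `V`: the set of
points where all members of `Q` vanish. -/
def baseLocus (Q : Submodule ℂ (QuadraticForm ℂ V)) : Set (Projectivization ℂ V) :=
  {x | ∀ q ∈ Q, q x.rep = 0}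

/-- The rank of the contraction map `i_v : Q → V^*`, `q ↦ q(v, ·)` (contraction with
the polar bilinear form of `q`): the rank of its image in `V^*`. -/
def contractionRank (Q : Submodule ℂ (QuadraticForm ℂ V)) (v : V) : Cardinal :=
  Module.rank ℂ ↥(Submodule.span ℂ
    (Set.range fun q : Q => QuadraticMap.polarBilin (q : QuadraticForm ℂ V) v))

/-- The subset `W_k ⊆ B` of points `v` of the base locus where the contraction map
`i_v : Q → V^*` has rank `≤ k`. -/
def Wset (Q : Submodule ℂ (QuadraticForm ℂ V)) (k : ℕ) :
    Set (Projectivization ℂ V) :=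
  {x ∈ baseLocus V Q | contractionRank V Q x.rep ≤ (k : Cardinal)}

section Helpers

open MvPolynomial

/-- Determinants of matrices of functions stay in a subalgebra of functions. -/
theorem det_mem_subalgebra {X : Type*} (S : Subalgebra ℂ (X → ℂ)) {n : ℕ}
    (M : X → Matrix (Fin n) (Fin n) ℂ) (hM : ∀ i j, (fun x => M x i j) ∈ S) :
    (fun x => (M x).det) ∈ S := by
  have : (fun x => (M x).det) = ∑ σ : Equiv.Perm (Fin n),
      ((Equiv.Perm.sign σ : ℤ) : ℂ) • ∏ i, (fun x => M x (σ i) i) := by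
    funext x
    simp [Matrix.det_apply']
  rw [this]
  exact S.sum_mem fun σ _ => S.smul_mem (S.prod_mem fun i _ => hM _ _) _

theorem adj_mem_subalgebra {X : Type*} (S : Subalgebra ℂ (X → ℂ)) {n : ℕ}
    (M : X → Matrix (Fin n) (Fin n) ℂ) (hM : ∀ i j, (fun x => M x i j) ∈ S) (a b : Fin n) :
    (fun x => (M x).adjugate a b) ∈ S := by
  simp only [Matrix.adjugate_apply]
  apply det_mem_subalgebra
  intro i j
  by_cases h : i = b
  · subst h
    simp only [Matrix.updateRow_self]
    exact S.algebraMap_mem (Pi.single (M := fun _ => ℂ) a 1 j)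
  · simp only [Matrix.updateRow_ne h]
    exact hM _ _

/-- Polynomial functions on `ℂ^m`. -/
def PF (m : ℕ) : Subalgebra ℂ ((Fin m → ℂ) → ℂ) :=
  (AlgHom.range (AlgHom.pi fun x : Fin m → ℂ => (MvPolynomial.aeval x : MvPolynomial (Fin m) ℂ →ₐ[ℂ] ℂ)))

theorem mem_PF {m : ℕ} {f : (Fin m → ℂ) → ℂ} : f ∈ PF m ↔ ∃ P : MvPolynomial (Fin m) ℂ,
    ∀ x, f x = eval x P := by
  simp only [PF, AlgHom.mem_range, funext_iff]
  constructor
  · rintro ⟨P, hP⟩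
    exact ⟨P, fun x => by rw [← hP x]; simp [MvPolynomial.aeval_eq_eval]⟩
  · rintro ⟨P, hP⟩
    exact ⟨P, fun x => by rw [hP x]; simp [MvPolynomial.aeval_eq_eval]⟩

theorem PF_coord {m : ℕ} (i : Fin m) : (fun x : Fin m → ℂ => x i) ∈ PF m :=
  mem_PF.2 ⟨X i, fun x => by simp⟩

theorem PF_const {m : ℕ} (c : ℂ) : (fun _ : Fin m → ℂ => c) ∈ PF m :=
  (PF m).algebraMap_mem c

theorem PF_exists {m : ℕ} {f g : (Fin m → ℂ) → ℂ} (hf : f ∈ PF m) (hg : g ∈ PF m)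
    {x y : Fin m → ℂ} (hx : f x ≠ 0) (hy : g y ≠ 0) : ∃ z, f z ≠ 0 ∧ g z ≠ 0 := by
  obtain ⟨P, hP⟩ := mem_PF.1 hf
  obtain ⟨R, hR⟩ := mem_PF.1 hg
  by_contra! h
  have : P * R = 0 := by
    apply MvPolynomial.funext
    intro z
    by_cases hz : f z = 0
    · simp [← hP, hz]
    · simp [← hR, h z hz]
  rcases mul_eq_zero.1 this with h | h
  · exact hx (by simp [hP, h])
  · exact hy (by simp [hR, h])

theorem PF_analytic {m : ℕ} {f : (Fin m → ℂ) → ℂ} (hf : f ∈ PF m) (x : Fin m → ℂ) :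
    AnalyticAt ℂ f x := by
  obtain ⟨P, hP⟩ := mem_PF.1 hf
  have : f = fun x => eval x P := funext hP
  rw [this]
  exact AnalyticOnNhd.eval_mvPolynomial P x (Set.mem_univ _)

/-- `i + 2` polynomial functions `t * p j x` of `i + 1` variables are dependent. -/
theorem exists_dep (i : ℕ) (p : Fin (i + 2) → (Fin i → ℂ) → ℂ) (hp : ∀ j, p j ∈ PF i) :
    ∃ F : MvPolynomial (Fin (i + 2)) ℂ, F ≠ 0 ∧
      ∀ (t : ℂ) (x : Fin i → ℂ), eval (fun j => t * p j x) F = 0 := by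
  choose P hP using fun j => mem_PF.1 (hp j)
  let R : Fin (i + 2) → MvPolynomial (Fin (i + 1)) ℂ := fun j => X 0 * rename Fin.succ (P j)
  have hR : ¬ AlgebraicIndependent ℂ R := by
    intro h
    have := h.cardinalMk_le_trdeg
    rw [MvPolynomial.trdeg_of_isDomain] at this
    simp only [Cardinal.mk_fin, Cardinal.lift_natCast, Nat.cast_le] at this
    omega
  rw [algebraicIndependent_iff] at hR
  push Not at hR
  obtain ⟨F, h0, hF⟩ := hR
  refine ⟨F, hF, fun t x => ?_⟩
  have h1 : eval (Fin.cons t x : Fin (i + 1) → ℂ) (aeval R F) = 0 := by rw [h0]; simp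
  rw [← MvPolynomial.aeval_eq_eval, ← AlgHom.comp_apply, MvPolynomial.comp_aeval] at h1
  rw [← h1, ← MvPolynomial.aeval_eq_eval]
  congr 2
  funext j
  simp only [R, MvPolynomial.aeval_eq_eval, map_mul, hP]
  simp [eval_rename, Function.comp_def]

theorem ift_lemma (m : ℕ) (p : (Fin m → ℂ) → ℂ) (g : Fin m → Fin m → (Fin m → ℂ) → ℂ)
    (hp : p ∈ PF m) (hg : ∀ l j, g l j ∈ PF m) (c : ℂ) (hc : c ≠ 0)
    (hp0 : p 0 ≠ 0) (hg0 : ∀ l j, g l j 0 = if l = j then c else 0)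
    (F : MvPolynomial (Fin (m + 1)) ℂ)
    (hF : ∀ᶠ z : ℂ × (Fin m → ℂ) in nhds (1, 0),
      eval (Fin.cons (z.1 * p z.2) (fun j => z.1 * ∑ l, z.2 l * g l j z.2) : Fin (m + 1) → ℂ) F = 0) :
    F = 0 := by
  let ψ : ℂ × (Fin m → ℂ) → (Fin (m + 1) → ℂ) := fun z =>
    Fin.cons (z.1 * p z.2) (fun j => z.1 * ∑ l, z.2 l * g l j z.2)
  let fs := ContinuousLinearMap.fst ℂ ℂ (Fin m → ℂ)
  let sn := ContinuousLinearMap.snd ℂ ℂ (Fin m → ℂ)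
  let pr : Fin m → (ℂ × (Fin m → ℂ) →L[ℂ] ℂ) := fun l => (ContinuousLinearMap.proj l).comp sn
  let ψ' : ℂ × (Fin m → ℂ) →L[ℂ] (Fin (m + 1) → ℂ) := ContinuousLinearMap.pi
    (Fin.cons ((1 : ℂ) • (fderiv ℂ p 0).comp sn + p 0 • fs) (fun j => c • pr j))
  have hd : HasStrictFDerivAt ψ ψ' (1, 0) := by
    rw [hasStrictFDerivAt_pi']
    intro j
    have hfst : HasStrictFDerivAt (fun z : ℂ × (Fin m → ℂ) => z.1) fs (1, 0) :=
      hasStrictFDerivAt_fst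
    have hsnd : HasStrictFDerivAt (fun z : ℂ × (Fin m → ℂ) => z.2) sn (1, 0) :=
      hasStrictFDerivAt_snd
    have hcomp : ∀ f ∈ PF m, HasStrictFDerivAt (fun z : ℂ × (Fin m → ℂ) => f z.2)
        ((fderiv ℂ f 0).comp sn) (1, 0) := fun f hf =>
      HasStrictFDerivAt.comp (g := f) (f := fun z : ℂ × (Fin m → ℂ) => z.2) (1, 0)
        ((PF_analytic hf 0).hasStrictFDerivAt) hsnd
    refine Fin.cases ?_ (fun j => ?_) j
    · exact hfst.mul (hcomp p hp)
    · have hpr : ∀ l, HasStrictFDerivAt (fun z : ℂ × (Fin m → ℂ) => z.2 l) (pr l) (1, 0) :=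
        fun l => (pr l).hasStrictFDerivAt
      have hsum := hfst.mul (HasStrictFDerivAt.fun_sum (u := Finset.univ)
        fun l _ => (hpr l).mul (hcomp _ (hg l j)))
      refine HasStrictFDerivAt.congr_fderiv hsum ?_
      change _ = c • pr j
      refine ContinuousLinearMap.ext fun z => ?_
      simp [pr, sn, fs, hg0]
      rw [Finset.sum_eq_single j]
      · simp
      · intro l _ hl
        simp [hl]
      · simp
  have hsurj : (ψ' : ℂ × (Fin m → ℂ) →ₗ[ℂ] (Fin (m + 1) → ℂ)).range = ⊤ := by
    rw [LinearMap.range_eq_top]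
    intro y
    let x : Fin m → ℂ := fun j => c⁻¹ * y j.succ
    refine ⟨((p 0)⁻¹ * (y 0 - fderiv ℂ p 0 x), x), ?_⟩
    funext j
    refine Fin.cases ?_ (fun j => ?_) j
    · simp [ψ', sn, fs, hp0]
    · simp [ψ', pr, sn, fs, x, hc]
  have hmap := hd.map_nhds_eq_of_surj hsurj
  have hev : ∀ᶠ y in nhds (ψ (1, 0)), eval y F = 0 := by
    rw [← hmap]; exact hF
  obtain ⟨ε, hε, hball⟩ := Metric.eventually_nhds_iff_ball.1 hev
  apply MvPolynomial.funext_set (fun i => Metric.ball (ψ (1, 0) i) ε)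
  · intro i
    exact infinite_of_mem_nhds _ (Metric.ball_mem_nhds _ hε)
  · intro y hy
    rw [map_zero]
    apply hball
    rw [ball_pi _ hε]
    exact hy

end Helpers
section Helpers2

open MvPolynomial

variable {V}

/-- Projective Zariski closure of the cone over a set of vectors. -/
def clo (S : Set V) : Set (Projectivization ℂ V) :=
  {p | ∀ f ∈ PolyFun V, (∀ v ∈ S, ∀ t : ℂ, t ≠ 0 → f (t • v) = 0) → f p.rep = 0}

theorem PolyFun_comp_smul {f : V → ℂ} (hf : f ∈ PolyFun V) (a : ℂ) :
    (fun v => f (a • v)) ∈ PolyFun V := by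
  unfold PolyFun at hf ⊢
  induction hf using Algebra.adjoin_induction with
  | mem x hx =>
    obtain ⟨φ, rfl⟩ := hx
    have : (fun v => φ (a • v)) = a • (φ : V → ℂ) := by funext v; simp
    simp only [this]
    exact Subalgebra.smul_mem _ (Algebra.subset_adjoin (Set.mem_range_self φ)) _
  | algebraMap r => exact Subalgebra.algebraMap_mem _ r
  | add x y _ _ hx hy => exact Subalgebra.add_mem _ hx hy
  | mul x y _ _ hx hy => exact Subalgebra.mul_mem _ hx hy

theorem PolyFun_comp {m : ℕ} {φ : (Fin m → ℂ) → V}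
    (hφ : ∀ ℓ : Module.Dual ℂ V, (fun x => ℓ (φ x)) ∈ PF m)
    {f : V → ℂ} (hf : f ∈ PolyFun V) : (fun x => f (φ x)) ∈ PF m := by
  unfold PolyFun at hf
  induction hf using Algebra.adjoin_induction with
  | mem x hx =>
    obtain ⟨ℓ, rfl⟩ := hx
    exact hφ ℓ
  | algebraMap r => exact Subalgebra.algebraMap_mem _ r
  | add x y _ _ hx hy => exact Subalgebra.add_mem _ hx hy
  | mul x y _ _ hx hy => exact Subalgebra.mul_mem _ hx hy

theorem PolyFun_dual (ℓ : Module.Dual ℂ V) : (fun v => ℓ v) ∈ PolyFun V :=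
  Algebra.subset_adjoin ⟨ℓ, rfl⟩

theorem PolyFun_eval {n : ℕ} (ℓ : Fin n → Module.Dual ℂ V) (F : MvPolynomial (Fin n) ℂ) :
    (fun v => eval (fun j => ℓ j v) F) ∈ PolyFun V := by
  induction F using MvPolynomial.induction_on with
  | C a => simp only [eval_C]; exact (PolyFun V).algebraMap_mem a
  | add p q hp hq => simp only [map_add]; exact (PolyFun V).add_mem hp hq
  | mul_X p i hp =>
    simp only [map_mul, eval_X]
    exact (PolyFun V).mul_mem hp (PolyFun_dual (ℓ i))

theorem mk_rep_smul (v : V) (hv : v ≠ 0) :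
    ∃ a : ℂ, a ≠ 0 ∧ (Projectivization.mk ℂ v hv).rep = a • v := by
  obtain ⟨a, ha⟩ := Projectivization.exists_smul_eq_mk_rep ℂ v hv
  exact ⟨a, a.ne_zero, ha.symm⟩

theorem mem_clo_mk (S : Set V) (v : V) (hv : v ≠ 0) :
    Projectivization.mk ℂ v hv ∈ clo S ↔
      ∀ f ∈ PolyFun V, (∀ v ∈ S, ∀ t : ℂ, t ≠ 0 → f (t • v) = 0) → f v = 0 := by
  obtain ⟨a, ha, hrep⟩ := mk_rep_smul v hv
  constructor
  · intro h f hf hS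
    have := h _ (PolyFun_comp_smul hf a⁻¹) (fun w hw t ht => by
      rw [smul_smul]; exact hS w hw _ (mul_ne_zero (inv_ne_zero ha) ht))
    simpa [hrep, smul_smul, ha] using this
  · intro h f hf hS
    have := h _ (PolyFun_comp_smul hf a) (fun w hw t ht => by
      rw [smul_smul]; exact hS w hw _ (mul_ne_zero ha ht))
    rw [hrep]; exact this

theorem clo_closed (S : Set V) : IsZariskiClosed V (clo S) := by
  refine ⟨{f | f ∈ PolyFun V ∧ ∀ v ∈ S, ∀ t : ℂ, t ≠ 0 → f (t • v) = 0}, fun f hf => hf.1, ?_⟩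
  intro v hv
  rw [mem_clo_mk]
  simp only [Set.mem_ofPred_eq, and_imp]

theorem subset_clo {S : Set V} {v : V} (hv : v ∈ S) (h0 : v ≠ 0) :
    Projectivization.mk ℂ v h0 ∈ clo S := by
  rw [mem_clo_mk]
  intro f _ h
  simpa using h v hv 1 one_ne_zero

theorem clo_mono {S T : Set V} (h : S ⊆ T) : clo S ⊆ clo T :=
  fun _ hp f hf hT => hp f hf fun v hv => hT v (h hv)

/-- Irreducibility of closures of polynomially parametrised sets. -/
theorem clo_irred {m : ℕ} {φ : (Fin m → ℂ) → V} {E : (Fin m → ℂ) → ℂ}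
    (hφ : ∀ ℓ : Module.Dual ℂ V, (fun x => ℓ (φ x)) ∈ PF m) (hE : E ∈ PF m)
    (hne : ∀ x, E x ≠ 0 → φ x ≠ 0) (Z₁ Z₂ : Set (Projectivization ℂ V))
    (h₁ : IsZariskiClosed V Z₁) (h₂ : IsZariskiClosed V Z₂)
    (h : clo {v | ∃ x, E x ≠ 0 ∧ φ x = v} ⊆ Z₁ ∪ Z₂) :
    clo {v | ∃ x, E x ≠ 0 ∧ φ x = v} ⊆ Z₁ ∨ clo {v | ∃ x, E x ≠ 0 ∧ φ x = v} ⊆ Z₂ := by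
  have key : ∀ Z : Set (Projectivization ℂ V), IsZariskiClosed V Z →
      ¬ clo {v | ∃ x, E x ≠ 0 ∧ φ x = v} ⊆ Z →
      ∃ f ∈ PF m, (∃ x, E x ≠ 0 ∧ f x ≠ 0) ∧ ∀ x (h : E x ≠ 0),
        Projectivization.mk ℂ (φ x) (hne x h) ∈ Z → f x = 0 := by
    rintro Z ⟨S, hS, hZ⟩ hn
    obtain ⟨p, hp, hpZ⟩ := Set.not_subset.1 hn
    have hp' := hZ p.rep p.rep_nonzero
    rw [Projectivization.mk_rep] at hp'
    rw [hp'] at hpZ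
    push Not at hpZ
    obtain ⟨f, hf, hfp⟩ := hpZ
    have : ¬ ∀ v ∈ {v | ∃ x, E x ≠ 0 ∧ φ x = v}, ∀ t : ℂ, t ≠ 0 → f (t • v) = 0 :=
      fun h => hfp (hp f (hS f hf) h)
    push Not at this
    obtain ⟨_, ⟨x, hx, rfl⟩, t, ht, hft⟩ := this
    refine ⟨fun x => f (t • φ x), PolyFun_comp hφ (PolyFun_comp_smul (hS f hf) t),
      ⟨x, hx, hft⟩, fun y hy hyZ => ?_⟩
    have hty : t • φ y ≠ 0 := smul_ne_zero ht (hne y hy)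
    have : Projectivization.mk ℂ (t • φ y) hty = Projectivization.mk ℂ (φ y) (hne y hy) := by
      rw [Projectivization.mk_eq_mk_iff']
      exact ⟨t, rfl⟩
    rw [← this, hZ] at hyZ
    exact hyZ f hf
  by_contra! hcon
  obtain ⟨f₁, hf₁, ⟨x₁, hx₁, hfx₁⟩, hZ₁⟩ := key Z₁ h₁ hcon.1
  obtain ⟨f₂, hf₂, ⟨x₂, hx₂, hfx₂⟩, hZ₂⟩ := key Z₂ h₂ hcon.2
  obtain ⟨y, hy1, hy2⟩ := PF_exists hf₁ hf₂ hfx₁ hfx₂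
  obtain ⟨z, hz1, hz2⟩ := PF_exists (f := f₁ * f₂) (g := E) ((PF m).mul_mem hf₁ hf₂) hE
    (x := y) (mul_ne_zero hy1 hy2) hx₁
  rcases h (subset_clo (S := {v | ∃ x, E x ≠ 0 ∧ φ x = v}) ⟨z, hz2, rfl⟩ (hne z hz2)) with h | h
  · exact left_ne_zero_of_mul hz1 (hZ₁ z hz2 h)
  · exact right_ne_zero_of_mul hz1 (hZ₂ z hz2 h)

/-- Strictness: a parametrised set of dimension `i + 1` is not in the closure of
one with `i` parameters. -/
theorem clo_not_subset {i : ℕ} {φ : (Fin i → ℂ) → V} {E : (Fin i → ℂ) → ℂ}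
    {φ' : (Fin (i + 1) → ℂ) → V} {E' : (Fin (i + 1) → ℂ) → ℂ}
    (hφ : ∀ ℓ : Module.Dual ℂ V, (fun x => ℓ (φ x)) ∈ PF i)
    (hφ' : ∀ ℓ : Module.Dual ℂ V, (fun x => ℓ (φ' x)) ∈ PF (i + 1)) (hE' : E' ∈ PF (i + 1))
    (hE0 : E' 0 ≠ 0) (hne : ∀ x, E' x ≠ 0 → φ' x ≠ 0)
    (ℓ₀ : Module.Dual ℂ V) (ℓ : Fin (i + 1) → Module.Dual ℂ V) (h0 : ℓ₀ (φ' 0) ≠ 0)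
    (g : Fin (i + 1) → Fin (i + 1) → (Fin (i + 1) → ℂ) → ℂ) (hg : ∀ l j, g l j ∈ PF (i + 1))
    (c : ℂ) (hc : c ≠ 0) (hg0 : ∀ l j, g l j 0 = if l = j then c else 0)
    (hℓ : ∀ x, E' x ≠ 0 → ∀ j, ℓ j (φ' x) = ∑ l, x l * g l j x) :
    ¬ clo {v | ∃ x, E' x ≠ 0 ∧ φ' x = v} ⊆ clo {v | ∃ x, E x ≠ 0 ∧ φ x = v} := by
  intro hsub
  let L : Fin (i + 2) → Module.Dual ℂ V := Fin.cons ℓ₀ ℓ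
  obtain ⟨F, hF0, hF⟩ := exists_dep i (fun j x => L j (φ x)) (fun j => hφ (L j))
  apply hF0
  refine ift_lemma (i + 1) (fun x => ℓ₀ (φ' x)) g (hφ' ℓ₀) hg c hc h0 hg0 F ?_
  have hcont : Filter.Tendsto (fun z : ℂ × (Fin (i + 1) → ℂ) => E' z.2) (nhds (1, 0))
      (nhds (E' 0)) :=
    ((PF_analytic hE' 0).continuousAt).tendsto.comp (continuous_snd.tendsto _)
  have hfst : Filter.Tendsto (fun z : ℂ × (Fin (i + 1) → ℂ) => z.1) (nhds (1, 0)) (nhds 1) :=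
    continuous_fst.tendsto _
  filter_upwards [hcont.eventually_ne hE0, hfst.eventually_ne one_ne_zero] with z hz ht
  have hmem := hsub (subset_clo (S := {v | ∃ x, E' x ≠ 0 ∧ φ' x = v}) ⟨z.2, hz, rfl⟩ (hne _ hz))
  rw [mem_clo_mk] at hmem
  have h1 := hmem (fun v => eval (fun j => L j (z.1 • v)) F)
    (PolyFun_comp_smul (PolyFun_eval L F) z.1) (by
      rintro _ ⟨x, _, rfl⟩ t _
      have := hF (z.1 * t) x
      simpa [smul_smul] using this)
  rw [← h1]
  congr 2
  funext j
  refine Fin.cases ?_ (fun j => ?_) j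
  · simp [L]
  · simp [L, hℓ _ hz]

end Helpers2
section Helpers3

variable {V}
variable {X : Type*} [AddCommGroup X] [Module ℂ X] (β : X →ₗ[ℂ] V →ₗ[ℂ] V →ₗ[ℂ] ℂ)

/-- Gram matrix. -/
def GM {r : ℕ} (b c : Fin r → V) (q : X) : Matrix (Fin r) (Fin r) ℂ :=
  Matrix.of fun i j => β q (b i) (c j)

/-- The form attached to `q` has rank at least `r`. -/
def HasRk (r : ℕ) (q : X) : Prop := ∃ b c : Fin r → V, (GM β b c q).det ≠ 0

theorem HasRk_le [FiniteDimensional ℂ V] {r : ℕ} {q : X} (h : HasRk β r q) :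
    r ≤ Module.finrank ℂ V := by
  obtain ⟨b, c, hd⟩ := h
  have hb : LinearIndependent ℂ b := by
    rw [Fintype.linearIndependent_iff]
    intro g hg
    have : Matrix.vecMul g (GM β b c q) = 0 := by
      funext j
      have h1 : β q (∑ i, g i • b i) (c j) = 0 := by rw [hg]; simp
      simpa [Matrix.vecMul, dotProduct, GM] using h1
    intro i
    rw [Matrix.eq_zero_of_vecMul_eq_zero hd this]
    rfl
  simpa using hb.fintype_card_le_finrank

theorem rad_of_max {r : ℕ} {q : X} (hmax : ¬ HasRk β (r + 1) q) {b c : Fin r → V}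
    (hd : (GM β b c q).det ≠ 0) {v : V} (hv : ∀ d, β q v (c d) = 0) (w : V) :
    β q v w = 0 := by
  by_contra hw
  apply hmax
  refine ⟨Fin.cons v b, Fin.cons w c, ?_⟩
  rw [Matrix.det_succ_row_zero, Fin.sum_univ_succ]
  have h2 : ∀ j : Fin r, (GM β (Fin.cons v b : Fin (r + 1) → V) (Fin.cons w c : Fin (r + 1) → V) q) 0 j.succ = 0 := by
    intro j
    simp [GM, hv]
  have h3 : (GM β (Fin.cons v b : Fin (r + 1) → V) (Fin.cons w c : Fin (r + 1) → V) q).submatrix Fin.succ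
      (Fin.succAbove 0) = GM β b c q := by
    ext i j
    simp [GM]
  simp only [h2, h3]
  simp [GM, hw]
  exact hd

/-- The polynomial family of kernel vectors. -/
def phi {r : ℕ} (b c : Fin r → V) (v₀ : V) (q : X) : V :=
  (GM β b c q).det • v₀ - ∑ a, (∑ d, β q v₀ (c d) * (GM β b c q).adjugate d a) • b a

theorem phi_orth {r : ℕ} (b c : Fin r → V) (v₀ : V) (q : X) (e : Fin r) :
    β q (phi β b c v₀ q) (c e) = 0 := by
  have h : ∀ d, ∑ a, (GM β b c q).adjugate d a * β q (b a) (c e) =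
      if d = e then (GM β b c q).det else 0 := by
    intro d
    have := congrFun (congrFun (Matrix.adjugate_mul (GM β b c q)) d) e
    rw [Matrix.mul_apply] at this
    simpa [Matrix.one_apply, GM] using this
  simp only [phi, map_sub, map_smul, map_sum, LinearMap.sub_apply, LinearMap.smul_apply,
    LinearMap.sum_apply, smul_eq_mul, Finset.sum_mul]
  rw [Finset.sum_comm]
  simp only [mul_assoc, ← Finset.mul_sum, h]
  simp
  ring

theorem phi_zero {r : ℕ} (b c : Fin r → V) (v₀ : V) (q : X) (h : β q v₀ = 0) :
    phi β b c v₀ q = (GM β b c q).det • v₀ := by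
  simp [phi, h]

/-- The affine family of forms. -/
def fam {m : ℕ} (q₀ : X) (h : Fin m → X) (x : Fin m → ℂ) : X := q₀ + ∑ l, x l • h l

theorem fam_apply {m : ℕ} (q₀ : X) (h : Fin m → X) (x : Fin m → ℂ) (v w : V) :
    β (fam q₀ h x) v w = β q₀ v w + ∑ l, x l * β (h l) v w := by
  simp [fam, LinearMap.sum_apply]

theorem fam_poly {m : ℕ} (q₀ : X) (h : Fin m → X) (v w : V) :
    (fun x => β (fam q₀ h x) v w) ∈ PF m := by
  have : (fun x => β (fam q₀ h x) v w) = (fun _ => β q₀ v w) +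
      ∑ l, (fun x : Fin m → ℂ => x l) * (fun _ => β (h l) v w) := by
    funext x
    simp [fam_apply]
  rw [this]
  exact (PF m).add_mem (PF_const _)
    ((PF m).sum_mem fun l _ => (PF m).mul_mem (PF_coord l) (PF_const _))

theorem det_poly {m r : ℕ} (q₀ : X) (h : Fin m → X) (b c : Fin r → V) :
    (fun x => (GM β b c (fam q₀ h x)).det) ∈ PF m :=
  det_mem_subalgebra _ _ fun i j => fam_poly β q₀ h (b i) (c j)

theorem phi_poly {m r : ℕ} (q₀ : X) (h : Fin m → X) (b c : Fin r → V) (v₀ : V)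
    (ℓ : Module.Dual ℂ V) : (fun x => ℓ (phi β b c v₀ (fam q₀ h x))) ∈ PF m := by
  have : (fun x => ℓ (phi β b c v₀ (fam q₀ h x))) =
      (fun x => (GM β b c (fam q₀ h x)).det) * (fun _ => ℓ v₀) -
      ∑ a, (∑ d, (fun x => β (fam q₀ h x) v₀ (c d)) *
        (fun x => (GM β b c (fam q₀ h x)).adjugate d a)) * (fun _ => ℓ (b a)) := by
    funext x
    simp [phi]
  rw [this]
  refine (PF m).sub_mem ((PF m).mul_mem (det_poly β q₀ h b c) (PF_const _))
    ((PF m).sum_mem fun a _ => (PF m).mul_mem ((PF m).sum_mem fun d _ =>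
      (PF m).mul_mem (fam_poly β q₀ h _ _) ?_) (PF_const _))
  exact adj_mem_subalgebra _ _ (fun i j => fam_poly β q₀ h (b i) (c j)) _ _

theorem fam_mem {m : ℕ} {Q : Submodule ℂ X} {q₀ : X} {h : Fin m → X} (hq : q₀ ∈ Q)
    (hh : ∀ l, h l ∈ Q) (x : Fin m → ℂ) : fam q₀ h x ∈ Q :=
  Q.add_mem hq (Q.sum_mem fun l _ => Q.smul_mem _ (hh l))

theorem fam_zero {m : ℕ} (q₀ : X) (h : Fin m → X) : fam q₀ h 0 = q₀ := by
  simp [fam]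

theorem isotropic (hsymm : ∀ x v w, β x v w = β x w v) {r : ℕ} {Q : Submodule ℂ X} (hmax : ∀ q ∈ Q, ¬ HasRk β (r + 1) q)
    {q : X} (hq : q ∈ Q) (hr : HasRk β r q) {v : V} (hv : β q v = 0) {h : X} (hh : h ∈ Q) :
    β h v v = 0 := by
  obtain ⟨b, c, hd⟩ := hr
  by_contra hne
  let H : Fin 1 → X := fun _ => h
  have hp : (fun x => β h (phi β b c v (fam q H x)) v) ∈ PF 1 :=
    phi_poly β q H b c v ((β h).flip v)
  obtain ⟨y, hy1, hy2⟩ := PF_exists hp (det_poly β q H b c) (x := 0) (y := 0)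
    (by simp [fam_zero, phi_zero β b c v q hv, hne, hd]) (by simpa [fam_zero] using hd)
  obtain ⟨z, hz1, hz2⟩ := PF_exists ((PF 1).mul_mem hp (det_poly β q H b c)) (PF_coord 0)
    (x := y) (y := 1) (mul_ne_zero hy1 hy2) (by simp)
  have h1 := rad_of_max β (hmax _ (fam_mem hq (fun _ => hh) z)) (right_ne_zero_of_mul hz1)
    (phi_orth β b c v (fam q H z)) v
  rw [fam_apply, hsymm q _ v, hv] at h1
  simp only [LinearMap.zero_apply, zero_add, Finset.univ_unique, Finset.sum_singleton, H] at h1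
  exact mul_ne_zero hz2 (left_ne_zero_of_mul hz1) h1

theorem chain [FiniteDimensional ℂ V] {r : ℕ} {Q : Submodule ℂ X}
    (hmax : ∀ q ∈ Q, ¬ HasRk β (r + 1) q)
    {q₀ : X} (hq₀ : q₀ ∈ Q) (hr : HasRk β r q₀) {v₀ : V} (hv₀ : v₀ ≠ 0) (hqv : β q₀ v₀ = 0)
    (k : ℕ) (h : ℕ → X) (e : ℕ → V) (hh : ∀ l, h l ∈ Q)
    (hδ : ∀ l < k, ∀ j < k, β (h l) v₀ (e j) = if l = j then 1 else 0)
    (A : Set (Projectivization ℂ V))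
    (hA : clo {v : V | v ≠ 0 ∧ ∃ q ∈ Q, HasRk β r q ∧ β q v = 0} ⊆ A) :
    ((k : ℕ∞) : WithBot ℕ∞) ≤ zariskiDim V A := by
  obtain ⟨b, c, hd⟩ := hr
  obtain ⟨ℓ₀, hℓ₀⟩ : ∃ ℓ : Module.Dual ℂ V, ℓ v₀ ≠ 0 := by
    by_contra! hcon
    exact hv₀ ((Module.forall_dual_apply_eq_zero_iff ℂ v₀).1 hcon)
  let H : (i : ℕ) → Fin i → X := fun i l => h l
  let φ : (i : ℕ) → (Fin i → ℂ) → V := fun i x => phi β b c v₀ (fam q₀ (H i) x)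
  let E : (i : ℕ) → (Fin i → ℂ) → ℂ := fun i x =>
    (GM β b c (fam q₀ (H i) x)).det * ℓ₀ (φ i x)
  have hφ : ∀ i (ℓ : Module.Dual ℂ V), (fun x => ℓ (φ i x)) ∈ PF i := fun i ℓ =>
    phi_poly β q₀ (H i) b c v₀ ℓ
  have hE : ∀ i, E i ∈ PF i := fun i => (PF i).mul_mem (det_poly β q₀ (H i) b c) (hφ i ℓ₀)
  have hφ0 : ∀ i, φ i 0 = (GM β b c q₀).det • v₀ := fun i => by
    simp only [φ, fam_zero, phi_zero β b c v₀ q₀ hqv]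
  have hE0 : ∀ i, E i 0 ≠ 0 := fun i => by
    simp only [E, hφ0, fam_zero]
    simp [hd, hℓ₀]
  have hne : ∀ i x, E i x ≠ 0 → φ i x ≠ 0 := fun i x hx h0 => by
    apply hx
    simp [E, h0]
  have hrad : ∀ i x, E i x ≠ 0 → ∀ w, β (fam q₀ (H i) x) (φ i x) w = 0 := fun i x hx =>
    rad_of_max β (hmax _ (fam_mem hq₀ (fun _ => hh _) x)) (left_ne_zero_of_mul hx)
      (phi_orth β b c v₀ _)
  let S : ℕ → Set V := fun i => {v | ∃ x, E i x ≠ 0 ∧ φ i x = v}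
  have hSA : ∀ i, clo (S i) ⊆ A := fun i => by
    refine (clo_mono ?_).trans hA
    rintro _ ⟨x, hx, rfl⟩
    exact ⟨hne i x hx, _, fam_mem hq₀ (fun _ => hh _) x, ⟨b, c, left_ne_zero_of_mul hx⟩,
      LinearMap.ext (hrad i x hx)⟩
  have hSS : ∀ i, S i ⊆ S (i + 1) := by
    rintro i _ ⟨x, hx, rfl⟩
    have hf : fam q₀ (H (i + 1)) (Fin.snoc x 0 : Fin (i + 1) → ℂ) = fam q₀ (H i) x := by
      simp [fam, Fin.sum_univ_castSucc, H]
    have hf' : φ (i + 1) (Fin.snoc x 0 : Fin (i + 1) → ℂ) = φ i x := by simp only [φ, hf]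
    refine ⟨(Fin.snoc x 0 : Fin (i + 1) → ℂ), ?_, hf'⟩
    simp only [E, hf, hf']
    exact hx
  have hstrict : ∀ i < k, ¬ clo (S (i + 1)) ⊆ clo (S i) := by
    intro i hi
    refine clo_not_subset (hφ i) (hφ (i + 1)) (hE (i + 1)) (hE0 (i + 1)) (hne (i + 1)) ℓ₀
      (fun j => -((β q₀).flip (e j))) (by simp [hφ0, hd, hℓ₀])
      (fun l j x => β (h l) (φ (i + 1) x) (e j))
      (fun l j => hφ (i + 1) ((β (h l)).flip (e j))) (GM β b c q₀).det hd ?_ ?_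
    · intro l j
      simp only [hφ0, map_smul, LinearMap.smul_apply, hδ l (by omega) j (by omega), Fin.ext_iff]
      simp
    · intro x hx j
      have := hrad (i + 1) x hx (e j)
      rw [fam_apply] at this
      simp only [LinearMap.neg_apply, LinearMap.flip_apply]
      exact neg_eq_of_add_eq_zero_right this
  have hpt : ∀ i, (clo (S i)).Nonempty := fun i =>
    ⟨_, subset_clo (S := S i) ⟨0, hE0 i, rfl⟩ (hne i 0 (hE0 i))⟩
  let Z : ℕ → {Z : Set (Projectivization ℂ V) //
    IsZariskiClosed V Z ∧ Z.Nonempty ∧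
    (∀ Z₁ Z₂ : Set (Projectivization ℂ V), IsZariskiClosed V Z₁ → IsZariskiClosed V Z₂ →
        Z ⊆ Z₁ ∪ Z₂ → Z ⊆ Z₁ ∨ Z ⊆ Z₂) ∧ Z ⊆ A} := fun i =>
    ⟨clo (S i), clo_closed _, hpt i, fun Z₁ Z₂ h₁ h₂ =>
      clo_irred (hφ i) (hE i) (hne i) Z₁ Z₂ h₁ h₂, hSA i⟩
  have hZ : ∀ i < k, Z i < Z (i + 1) := fun i hi =>
    lt_of_le_not_ge (clo_mono (hSS i)) (hstrict i hi)
  exact le_iSup (fun p : LTSeries _ => ((p.length : ℕ∞) : WithBot ℕ∞))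
    { length := k
      toFun := fun i => Z i
      step := fun i => hZ i i.2 }

end Helpers3
section Helpers4

variable {V}

/-- The polar form, linear in the quadratic form. -/
def polL : QuadraticForm ℂ V →ₗ[ℂ] V →ₗ[ℂ] V →ₗ[ℂ] ℂ where
  toFun q := QuadraticMap.polarBilin q
  map_add' q q' := by
    ext v w
    simp [QuadraticMap.polar]
    ring
  map_smul' a q := by
    ext v w
    simp [QuadraticMap.polar]
    ring

theorem polL_apply (q : QuadraticForm ℂ V) : polL q = QuadraticMap.polarBilin q := rfl

theorem polL_symm (q : QuadraticForm ℂ V) (v w : V) : polL q v w = polL q w v := by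
  simp [polL_apply, QuadraticMap.polar_comm]

theorem polL_self (q : QuadraticForm ℂ V) (v : V) : polL q v v = 2 * q v := by
  simp [polL_apply]

/-- Independent functionals have a dual family of vectors. -/
theorem exists_dual_family [FiniteDimensional ℂ V] {n : ℕ} (u : Fin n → Module.Dual ℂ V)
    (hu : LinearIndependent ℂ u) : ∃ e : Fin n → V, ∀ i j, u i (e j) = if i = j then 1 else 0 := by
  have : ∀ j : Fin n, ∃ v : V, ∀ i, u i v = if i = j then 1 else 0 := by
    intro j
    obtain ⟨g, hg⟩ := LinearMap.exists_extend
      ((Finsupp.lapply j : (Fin n →₀ ℂ) →ₗ[ℂ] ℂ) ∘ₗ (hu.repr : _ →ₗ[ℂ] (Fin n →₀ ℂ)))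
    refine ⟨(Module.evalEquiv ℂ V).symm g, fun i => ?_⟩
    rw [Module.apply_evalEquiv_symm_apply]
    have h1 := LinearMap.congr_fun hg ⟨u i, Submodule.subset_span (Set.mem_range_self i)⟩
    have h2 := hu.repr_eq_single i ⟨u i, Submodule.subset_span (Set.mem_range_self i)⟩ rfl
    simp only [LinearMap.comp_apply, Submodule.subtype_apply] at h1
    rw [h1]
    simp [h2, Finsupp.single_apply]
  choose e he using this
  exact ⟨e, fun i j => he j i⟩

/-- From the rank of the contraction to a dual family. -/
theorem exists_of_rank [FiniteDimensional ℂ V] (Q : Submodule ℂ (QuadraticForm ℂ V)) (v : V)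
    (n : ℕ) (hn : (n : Cardinal) ≤ contractionRank V Q v) :
    ∃ (h : Fin n → QuadraticForm ℂ V) (e : Fin n → V), (∀ l, h l ∈ Q) ∧
      ∀ l j, polL (h l) v (e j) = if l = j then 1 else 0 := by
  unfold contractionRank at hn
  obtain ⟨u, hu⟩ := le_rank_iff.1 hn
  let T : Q →ₗ[ℂ] Module.Dual ℂ V := ((LinearMap.applyₗ v).comp polL).comp Q.subtype
  have hspan : Submodule.span ℂ
    (Set.range fun q : Q => QuadraticMap.polarBilin (q : QuadraticForm ℂ V) v) ≤ LinearMap.range T := by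
    rw [Submodule.span_le]
    rintro _ ⟨q, rfl⟩
    exact ⟨q, rfl⟩
  have : ∀ l, ∃ q : Q, T q = u l := fun l => hspan (u l).2
  choose q hq using this
  have hu' : LinearIndependent ℂ (fun l => (u l : Module.Dual ℂ V)) :=
    hu.map' (Submodule.subtype _) (Submodule.ker_subtype _)
  obtain ⟨e, he⟩ := exists_dual_family _ hu'
  refine ⟨fun l => q l, e, fun l => (q l).2, fun l j => ?_⟩
  rw [← he l j, ← hq l]
  rfl

/-- Normalising a nondegenerate pairing. -/
theorem exists_normalise {k : ℕ} (u : Fin k → Module.Dual ℂ V) (e : Fin k → V)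
    (hd : (Matrix.of fun l j => u l (e j)).det ≠ 0) :
    ∃ e' : Fin k → V, ∀ i j, u i (e' j) = if i = j then 1 else 0 := by
  set G : Matrix (Fin k) (Fin k) ℂ := Matrix.of fun l j => u l (e j) with hG
  refine ⟨fun j => ∑ m, G⁻¹ m j • e m, fun i j => ?_⟩
  have h1 := congrFun (congrFun (Matrix.mul_nonsing_inv G (Ne.isUnit hd)) i) j
  rw [Matrix.mul_apply, Matrix.one_apply] at h1
  rw [← h1]
  simp [hG, mul_comm]

/-- The pair-maximality predicate. -/
def RR (Q : Submodule ℂ (QuadraticForm ℂ V)) (r k : ℕ) : Prop :=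
  ∃ v : V, (v ≠ 0 ∧ ∃ q ∈ Q, HasRk polL r q ∧ polL q v = 0) ∧
    ∃ (h : Fin k → QuadraticForm ℂ V) (e : Fin k → V), (∀ l, h l ∈ Q) ∧
      ∀ l j, polL (h l) v (e j) = if l = j then 1 else 0

theorem RR_le [FiniteDimensional ℂ V] {Q : Submodule ℂ (QuadraticForm ℂ V)} {r k : ℕ}
    (h : RR Q r k) : k ≤ Module.finrank ℂ V := by
  obtain ⟨v, -, h, e, -, hδ⟩ := h
  have he : LinearIndependent ℂ e := by
    rw [Fintype.linearIndependent_iff]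
    intro g hg i
    have h1 : polL (h i) v (∑ j, g j • e j) = 0 := by rw [hg]; simp
    simpa [hδ] using h1
  simpa using he.fintype_card_le_finrank

theorem exists_last (P : ℕ → Prop) (h0 : P 0) (N : ℕ) (hN : ∀ n, P n → n ≤ N) :
    ∃ n, P n ∧ ¬ P (n + 1) := by
  by_contra! h
  have : ∀ n, P n := fun n => Nat.rec h0 (fun n hn => h n hn) n
  have := hN _ (this (N + 1))
  omega

theorem clo_subset_W [FiniteDimensional ℂ V] {Q : Submodule ℂ (QuadraticForm ℂ V)} {r k : ℕ}
    (hmax : ∀ q ∈ Q, ¬ HasRk polL (r + 1) q) (hk : ¬ RR Q r (k + 1)) :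
    clo {v : V | v ≠ 0 ∧ ∃ q ∈ Q, HasRk polL r q ∧ polL q v = 0} ⊆ Wset V Q k := by
  intro p hp
  have hscale : ∀ v ∈ {v : V | v ≠ 0 ∧ ∃ q ∈ Q, HasRk polL r q ∧ polL q v = 0},
      ∀ t : ℂ, t ≠ 0 → t • v ∈ {v : V | v ≠ 0 ∧ ∃ q ∈ Q, HasRk polL r q ∧ polL q v = 0} := by
    rintro v ⟨hv, q, hq, hr, hqv⟩ t ht
    exact ⟨smul_ne_zero ht hv, q, hq, hr, by rw [map_smul, hqv, smul_zero]⟩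
  have hdet : ∀ {n : ℕ} (h : Fin n → QuadraticForm ℂ V) (e : Fin n → V),
      (fun v => (Matrix.of fun l j => polL (h l) v (e j)).det) ∈ PolyFun V := fun h e =>
    det_mem_subalgebra _ _ fun l j => PolyFun_dual ((polL (h l)).flip (e j))
  refine ⟨fun q hq => ?_, ?_⟩
  · -- quadratic forms are polynomial functions
    have hpoly : (fun v => q v) ∈ PolyFun V := by
      let B := Module.finBasis ℂ V
      have : (fun v => q v) = (2⁻¹ : ℂ) • ∑ i, (fun v => B.coord i v) * (fun v => (polL q (B i)) v) := by
        funext v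
        have h1 : polL q (∑ i, B.repr v i • B i) v = 2 * q v := by
          rw [B.sum_repr, polL_self]
        simp only [map_sum, map_smul, LinearMap.sum_apply, LinearMap.smul_apply, smul_eq_mul] at h1
        simp [h1]
      rw [this]
      exact (PolyFun V).smul_mem ((PolyFun V).sum_mem fun i _ =>
        (PolyFun V).mul_mem (PolyFun_dual _) (PolyFun_dual _)) _
    refine hp _ hpoly fun v hv t ht => ?_
    obtain ⟨_, q', hq', hr, hqv⟩ := hscale v hv t ht
    have := isotropic polL polL_symm hmax hq' hr hqv hq
    rw [polL_self] at this
    simpa using this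
  · by_contra hlt
    rw [not_le] at hlt
    have hlt' : ((k + 1 : ℕ) : Cardinal) ≤ contractionRank V Q p.rep := by
      rw [Nat.cast_add, Nat.cast_one]
      exact Cardinal.add_one_le_of_lt hlt
    obtain ⟨h, e, hh, hδ⟩ := exists_of_rank Q p.rep (k + 1) hlt'
    have := hp _ (hdet h e) (fun v hv t ht => by
      by_contra hne
      obtain ⟨e', he'⟩ := exists_normalise (fun l => polL (h l) (t • v)) e hne
      exact hk ⟨t • v, hscale v hv t ht, h, e', hh, he'⟩)
    have h1 : (Matrix.of fun l j => polL (h l) p.rep (e j)) = 1 := by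
      ext l j
      simp [hδ, Matrix.one_apply]
    rw [h1] at this
    simp at this

end Helpers4

/-- A linear system of quadrics `Q` on a finite-dimensional complex
vector space `V` satisfying condition (*) — for every `k ≤ b := dim B`, the set `W_k`
has dimension `< k` — contains a smooth quadric. -/
theorem linear_system_contains_smooth_quadric
    [FiniteDimensional ℂ V]
    (Q : Submodule ℂ (QuadraticForm ℂ V))
    (hstar : ∀ k : ℕ, ((k : ℕ∞) : WithBot ℕ∞) ≤ zariskiDim V (baseLocus V Q) →
      zariskiDim V (Wset V Q k) < ((k : ℕ∞) : WithBot ℕ∞)) :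
    ∃ q ∈ Q, LinearMap.BilinForm.Nondegenerate
      (QuadraticMap.polarBilin (q : QuadraticForm ℂ V)) := by
  by_contra! hcon
  -- every member of `Q` has a nonzero kernel vector
  have hker : ∀ q ∈ Q, ∃ v : V, v ≠ 0 ∧ polL q v = 0 := by
    intro q hq
    by_contra! h
    apply hcon q hq
    have hl : (QuadraticMap.polarBilin q).SeparatingLeft := by
      intro v hv
      by_contra hv0
      exact h v hv0 (LinearMap.ext hv)
    refine ⟨hl, fun v hv => hl v fun w => ?_⟩
    rw [← hv w]
    exact polL_symm q v w
  obtain ⟨r, ⟨q, hq, hr⟩, hrmax⟩ := exists_last (fun r => ∃ q ∈ Q, HasRk polL r q)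
    ⟨0, Q.zero_mem, Fin.elim0, Fin.elim0, by simp⟩ (Module.finrank ℂ V)
    (fun n ⟨q, _, h⟩ => HasRk_le polL h)
  have hmax : ∀ q ∈ Q, ¬ HasRk polL (r + 1) q := fun q hq h => hrmax ⟨q, hq, h⟩
  obtain ⟨v, hv, hqv⟩ := hker q hq
  obtain ⟨k, ⟨v₀, ⟨hv₀, q₀, hq₀, hr₀, hqv₀⟩, h, e, hh, hδ⟩, hkmax⟩ := exists_last (RR Q r)
    ⟨v, ⟨hv, q, hq, hr, hqv⟩, Fin.elim0, Fin.elim0, fun l => l.elim0, fun l => l.elim0⟩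
    (Module.finrank ℂ V) (fun n h => RR_le h)
  have hW : ((k : ℕ∞) : WithBot ℕ∞) ≤ zariskiDim V (Wset V Q k) := by
    refine chain polL hmax hq₀ hr₀ hv₀ hqv₀ k (fun l => if hl : l < k then h ⟨l, hl⟩ else 0)
      (fun l => if hl : l < k then e ⟨l, hl⟩ else 0) ?_ ?_ _ (clo_subset_W hmax hkmax)
    · intro l
      split_ifs
      · exact hh _
      · exact Q.zero_mem
    · intro l hl j hj
      simp [hl, hj, hδ]
  have hB : zariskiDim V (Wset V Q k) ≤ zariskiDim V (baseLocus V Q) := by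
    refine Order.krullDim_le_of_strictMono
      (fun Z => ⟨Z.1, Z.2.1, Z.2.2.1, Z.2.2.2.1, fun x hx => (Z.2.2.2.2 hx).1⟩) ?_
    intro Z Z' h
    exact h
  exact absurd (hstar k (hW.trans hB)) (not_lt.2 hW)
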